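/- (Leading drift of the spherical gradient) Let x ∼ N(0, I_d), W* ∈ ℝ^{m×d} with orthonormal rows, w ∈ ℝ^d a unit vector, and consider the degree-2 component f₂(x) = m^{-1/2} Σ_{i=1}^{m} He₂(⟨w*_i, x⟩). Then E[f₂(x) He₁(⟨w, x⟩) x] projected orthogonally to w equals √2 m^{-1/2} (I − wwᵀ)(W*)ᵀ W* w; its component along the unit vector u* = P_{W*}w / ‖P_{W*}w‖ equals √2 m^{-1/2} (mₜ − mₜ³) where mₜ = ⟨u*, w⟩ and P_{W*} = (W*)ᵀW*. -/

import Mathlib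

open MeasureTheory ProbabilityTheory Matrix

open scoped NNReal RealInnerProductSpace

/-! Stein's lemma gives `E[X⁴] = 3 Var[X]²` for a centered real Gaussian. Fourth moments of linear
functionals determine their mixed moments by polarization, so for a centered Gaussian vector
`E[L² M N] = Var[L] cov[M, N] + 2 cov[L, M] cov[L, N]`. Letting `N` vary over all functionals
yields `E[(⟪a, x⟫² - 1) ⟪b, x⟫ x] = (‖a‖² - 1) b + 2 ⟪a, b⟫ a` for a standard Gaussian `x`. The
first term vanishes for the unit rows of `W*`, which leaves the drift `√2 m^{-1/2} p` with
`p = P_{W*} w`. Finally `⟨p, w⟩ = ‖p‖²` because `P_{W*}` is an orthogonal projection, so `mₜ = ‖p‖`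
and the component of `p - ⟨w, p⟩ w` along `p / ‖p‖` is `mₜ - mₜ³`. -/

section RealGaussian

variable {v : ℝ≥0}

lemma hasDerivAt_gaussianPDFReal (μ : ℝ) (v : ℝ≥0) (x : ℝ) :
    HasDerivAt (gaussianPDFReal μ v) (-((x - μ) / v) * gaussianPDFReal μ v x) x := by
  have h : HasDerivAt (fun y : ℝ ↦ -(y - μ) ^ 2 / (2 * v)) (-((x - μ) / v)) x := by
    convert! (((hasDerivAt_id' x).sub_const μ).pow 2).neg.div_const (2 * (v : ℝ)) using 1
    push_cast
    ring
  rw [gaussianPDFReal_def]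
  convert! h.exp.const_mul (√(2 * Real.pi * v))⁻¹ using 1
  ring

lemma integrable_gaussianReal_iff {μ : ℝ} (hv : v ≠ 0) {f : ℝ → ℝ} :
    Integrable f (gaussianReal μ v) ↔ Integrable fun x ↦ gaussianPDFReal μ v x * f x := by
  rw [gaussianReal_of_var_ne_zero μ hv, integrable_withDensity_iff_integrable_smul'
    (measurable_gaussianPDF μ v) (ae_of_all _ fun _ ↦ gaussianPDF_lt_top)]
  simp only [toReal_gaussianPDF, smul_eq_mul]

/-- Stein's lemma. -/
lemma integral_sub_mul_gaussianReal {μ : ℝ} {f f' : ℝ → ℝ} (hf : ∀ x, HasDerivAt f (f' x) x)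
    (hf_int : Integrable f (gaussianReal μ v)) (hf'_int : Integrable f' (gaussianReal μ v))
    (hxf_int : Integrable (fun x ↦ (x - μ) * f x) (gaussianReal μ v)) :
    ∫ x, (x - μ) * f x ∂gaussianReal μ v = v * ∫ x, f' x ∂gaussianReal μ v := by
  rcases eq_or_ne v 0 with rfl | hv
  · simp
  have hv' : (v : ℝ) ≠ 0 := NNReal.coe_ne_zero.2 hv
  rw [integrable_gaussianReal_iff hv] at hf_int hf'_int hxf_int
  have h := integral_mul_deriv_eq_deriv_mul_of_integrable
    (fun x _ ↦ hasDerivAt_gaussianPDFReal μ v x) (fun x _ ↦ hf x) hf'_int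
    ((hxf_int.const_mul (-(v : ℝ)⁻¹)).congr (ae_of_all _ fun x ↦ by
      simp only [Pi.mul_apply]; ring)) hf_int
  simp only [integral_gaussianReal_eq_integral_smul hv, smul_eq_mul, h, ← integral_neg,
    ← integral_const_mul]
  congr with x
  field_simp

lemma integrable_pow_gaussianReal (μ : ℝ) (v : ℝ≥0) (n : ℕ) :
    Integrable (fun x ↦ x ^ n) (gaussianReal μ v) := by
  rw [← integrable_norm_iff (by fun_prop)]
  simpa using (memLp_id_gaussianReal (μ := μ) (v := v) n).integrable_norm_pow'

lemma integral_pow_add_two_gaussianReal (v : ℝ≥0) (n : ℕ) :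
    ∫ x, x ^ (n + 2) ∂gaussianReal 0 v = (n + 1) * v * ∫ x, x ^ n ∂gaussianReal 0 v := by
  have h := integral_sub_mul_gaussianReal (μ := 0) (v := v) (fun x ↦ hasDerivAt_pow (n + 1) x)
    (integrable_pow_gaussianReal 0 v (n + 1))
    ((integrable_pow_gaussianReal 0 v n).const_mul _)
    (by simpa only [sub_zero, ← pow_succ'] using integrable_pow_gaussianReal 0 v (n + 2))
  simp only [sub_zero, ← pow_succ', Nat.add_sub_cancel, integral_const_mul, Nat.cast_add_one] at h
  rw [h]
  ring

lemma integral_pow_four_gaussianReal (v : ℝ≥0) :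
    ∫ x, x ^ 4 ∂gaussianReal 0 v = 3 * (v : ℝ) ^ 2 := by
  rw [integral_pow_add_two_gaussianReal v 2, integral_pow_add_two_gaussianReal v 0]
  simp only [pow_zero, integral_const, probReal_univ, smul_eq_mul]
  push_cast
  ring

end RealGaussian

section CenteredGaussian

variable {E : Type*} [NormedAddCommGroup E] [NormedSpace ℝ E] [MeasurableSpace E] {μ : Measure E}

lemma integral_strongDual_mul (hμ : ∀ L : StrongDual ℝ E, μ[L] = 0) (L M : StrongDual ℝ E) :
    ∫ x, L x * M x ∂μ = cov[L, M; μ] := by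
  simp only [covariance, hμ, sub_zero]

variable [BorelSpace E] [IsGaussian μ]

lemma integrable_strongDual_mul (L M : StrongDual ℝ E) : Integrable (fun x ↦ L x * M x) μ :=
  (IsGaussian.memLp_dual μ L 2 (by simp)).integrable_mul (IsGaussian.memLp_dual μ M 2 (by simp))

lemma integrable_strongDual_pow (L : StrongDual ℝ E) (n : ℕ) :
    Integrable (fun x ↦ L x ^ n) μ := by
  rw [← integrable_norm_iff (by fun_prop)]
  simpa using (IsGaussian.memLp_dual μ L n (by simp)).integrable_norm_pow'

lemma integral_strongDual_pow_four (hμ : ∀ L : StrongDual ℝ E, μ[L] = 0) (L : StrongDual ℝ E) :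
    ∫ x, L x ^ 4 ∂μ = 3 * Var[L; μ] ^ 2 := by
  rw [← integral_map (φ := L) (f := fun y ↦ y ^ 4) (by fun_prop) (by fun_prop),
    IsGaussian.map_eq_gaussianReal, hμ, integral_pow_four_gaussianReal,
    Real.coe_toNNReal _ (variance_nonneg _ _)]

lemma sq_mul_sq_eq_polarization (s t : ℝ) :
    s ^ 2 * t ^ 2 = 12⁻¹ * ((s + t) ^ 4 + (s - t) ^ 4 - 2 * (s ^ 4 + t ^ 4)) := by
  ring

lemma integrable_strongDual_sq_mul_sq (L M : StrongDual ℝ E) :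
    Integrable (fun x ↦ L x ^ 2 * M x ^ 2) μ := by
  simp_rw [sq_mul_sq_eq_polarization]
  exact (((integrable_strongDual_pow (L + M) 4).add (integrable_strongDual_pow (L - M) 4)).sub
    (((integrable_strongDual_pow L 4).add (integrable_strongDual_pow M 4)).const_mul 2)).const_mul _

lemma integral_strongDual_sq_mul_sq (hμ : ∀ L : StrongDual ℝ E, μ[L] = 0) (L M : StrongDual ℝ E) :
    ∫ x, L x ^ 2 * M x ^ 2 ∂μ = Var[L; μ] * Var[M; μ] + 2 * cov[L, M; μ] ^ 2 := by
  have int_pow_four (K : StrongDual ℝ E) := integrable_strongDual_pow (μ := μ) K 4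
  have hL := IsGaussian.memLp_dual μ L 2 (by simp)
  have hM := IsGaussian.memLp_dual μ M 2 (by simp)
  calc ∫ x, L x ^ 2 * M x ^ 2 ∂μ
    _ = ∫ x, 12⁻¹ * ((L + M) x ^ 4 + (L - M) x ^ 4 - 2 * (L x ^ 4 + M x ^ 4)) ∂μ :=
      integral_congr_ae <| ae_of_all _ fun x ↦ sq_mul_sq_eq_polarization (L x) (M x)
    _ = 12⁻¹ * (∫ x, (L + M) x ^ 4 ∂μ + ∫ x, (L - M) x ^ 4 ∂μ
          - 2 * (∫ x, L x ^ 4 ∂μ + ∫ x, M x ^ 4 ∂μ)) := by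
      rw [integral_const_mul, integral_sub, integral_const_mul, integral_add, integral_add]
      all_goals fun_prop
    _ = Var[L; μ] * Var[M; μ] + 2 * cov[L, M; μ] ^ 2 := by
      simp only [integral_strongDual_pow_four hμ]
      simp only [FunLike.coe_add, FunLike.coe_sub, variance_add hL hM, variance_sub hL hM]
      ring

lemma mul_eq_polarization (s t : ℝ) : s * t = 4⁻¹ * ((s + t) ^ 2 - (s - t) ^ 2) := by
  ring

lemma integrable_strongDual_sq_mul_mul (L M N : StrongDual ℝ E) :
    Integrable (fun x ↦ L x ^ 2 * (M x * N x)) μ := by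
  simp_rw [mul_eq_polarization (M _), mul_left_comm (L _ ^ 2), mul_sub (L _ ^ 2)]
  exact ((integrable_strongDual_sq_mul_sq L (M + N)).sub
    (integrable_strongDual_sq_mul_sq L (M - N))).const_mul _

lemma integral_strongDual_sq_mul_mul (hμ : ∀ L : StrongDual ℝ E, μ[L] = 0)
    (L M N : StrongDual ℝ E) :
    ∫ x, L x ^ 2 * (M x * N x) ∂μ =
      Var[L; μ] * cov[M, N; μ] + 2 * cov[L, M; μ] * cov[L, N; μ] := by
  have hL := IsGaussian.memLp_dual μ L 2 (by simp)
  have hM := IsGaussian.memLp_dual μ M 2 (by simp)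
  have hN := IsGaussian.memLp_dual μ N 2 (by simp)
  calc ∫ x, L x ^ 2 * (M x * N x) ∂μ
    _ = ∫ x, 4⁻¹ * (L x ^ 2 * (M + N) x ^ 2 - L x ^ 2 * (M - N) x ^ 2) ∂μ := by
      simp_rw [mul_eq_polarization (M _), mul_left_comm (L _ ^ 2), mul_sub (L _ ^ 2)]
      rfl
    _ = 4⁻¹ * (∫ x, L x ^ 2 * (M + N) x ^ 2 ∂μ - ∫ x, L x ^ 2 * (M - N) x ^ 2 ∂μ) := by
      rw [integral_const_mul, integral_sub (integrable_strongDual_sq_mul_sq _ _)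
        (integrable_strongDual_sq_mul_sq _ _)]
    _ = Var[L; μ] * cov[M, N; μ] + 2 * cov[L, M; μ] * cov[L, N; μ] := by
      simp only [integral_strongDual_sq_mul_sq hμ]
      simp only [FunLike.coe_add, FunLike.coe_sub, variance_add hM hN, variance_sub hM hN,
        covariance_add_right hL hM hN, covariance_sub_right hL hM hN]
      ring

lemma integral_strongDual_sq_sub_one_mul_mul (hμ : ∀ L : StrongDual ℝ E, μ[L] = 0)
    (L M N : StrongDual ℝ E) :
    ∫ x, (L x ^ 2 - 1) * (M x * N x) ∂μ =
      (Var[L; μ] - 1) * cov[M, N; μ] + 2 * cov[L, M; μ] * cov[L, N; μ] := by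
  simp_rw [sub_one_mul]
  rw [integral_sub (integrable_strongDual_sq_mul_mul L M N) (integrable_strongDual_mul M N),
    integral_strongDual_sq_mul_mul hμ, integral_strongDual_mul hμ]
  ring

end CenteredGaussian

section StdGaussian

lemma integrable_of_forall_integrable_inner {α E : Type*} [MeasurableSpace α] {μ : Measure α}
    [NormedAddCommGroup E] [InnerProductSpace ℝ E] [FiniteDimensional ℝ E] {f : α → E}
    (hf : ∀ c : E, Integrable (fun x ↦ ⟪c, f x⟫) μ) : Integrable f μ := by
  have h := integrable_finsetSum Finset.univ fun i _ ↦
    (hf (stdOrthonormalBasis ℝ E i)).smul_const (stdOrthonormalBasis ℝ E i)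
  simpa only [OrthonormalBasis.sum_repr'] using h

variable {E : Type*} [NormedAddCommGroup E] [InnerProductSpace ℝ E] [FiniteDimensional ℝ E]
  [MeasurableSpace E] [BorelSpace E]

lemma covariance_innerSL_stdGaussian (a b : E) :
    cov[innerSL ℝ a, innerSL ℝ b; stdGaussian E] = ⟪a, b⟫ := by
  have h := covarianceBilin_apply_eq_cov (μ := stdGaussian E) IsGaussian.memLp_two_id a b
  rw [covarianceBilin_stdGaussian] at h
  exact h.symm

lemma variance_innerSL_stdGaussian (a : E) :
    Var[innerSL ℝ a; stdGaussian E] = ‖a‖ ^ 2 := by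
  rw [variance_dual_stdGaussian, innerSL_apply_norm]

lemma integrable_inner_sq_sub_one_mul_inner_smul_stdGaussian (a b : E) :
    Integrable (fun x ↦ ((⟪a, x⟫ ^ 2 - 1) * ⟪b, x⟫) • x) (stdGaussian E) := by
  refine integrable_of_forall_integrable_inner fun c ↦ ?_
  simp_rw [real_inner_smul_right, mul_assoc, sub_one_mul]
  exact (integrable_strongDual_sq_mul_mul (innerSL ℝ a) (innerSL ℝ b) (innerSL ℝ c)).sub
    (integrable_strongDual_mul (innerSL ℝ b) (innerSL ℝ c))

lemma integral_inner_sq_sub_one_mul_inner_smul_stdGaussian (a b : E) :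
    ∫ x, ((⟪a, x⟫ ^ 2 - 1) * ⟪b, x⟫) • x ∂stdGaussian E =
      (‖a‖ ^ 2 - 1) • b + (2 * ⟪a, b⟫) • a := by
  refine ext_inner_left ℝ fun c ↦ ?_
  have h := integral_strongDual_sq_sub_one_mul_mul integral_strongDual_stdGaussian
    (innerSL ℝ a) (innerSL ℝ b) (innerSL ℝ c)
  simp only [variance_innerSL_stdGaussian, covariance_innerSL_stdGaussian, innerSL_apply_apply] at h
  rw [← integral_inner (integrable_inner_sq_sub_one_mul_inner_smul_stdGaussian a b)]
  simp only [real_inner_smul_right, inner_add_right, mul_assoc, real_inner_comm c] at h ⊢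
  exact h

lemma integral_sum_hermite_two_mul_inner_smul_stdGaussian {ι : Type*} [Fintype ι] (r : ℝ)
    {W : ι → E} (hW : ∀ i, ‖W i‖ = 1) (w : E) :
    ∫ x, ((r * ∑ i, (⟪W i, x⟫ ^ 2 - 1) / √2) * ⟪w, x⟫) • x ∂stdGaussian E =
      (√2 * r) • ∑ i, ⟪W i, w⟫ • W i := by
  calc ∫ x, ((r * ∑ i, (⟪W i, x⟫ ^ 2 - 1) / √2) * ⟪w, x⟫) • x ∂stdGaussian E
    _ = ∫ x, (r / √2) • ∑ i, ((⟪W i, x⟫ ^ 2 - 1) * ⟪w, x⟫) • x ∂stdGaussian E := by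
      congr with x
      rw [← Finset.sum_div, ← Finset.sum_smul, ← Finset.sum_mul, smul_smul]
      congr 1
      ring
    _ = (r / √2) • ∑ i, (2 * ⟪W i, w⟫) • W i := by
      rw [integral_smul, integral_finsetSum _ fun i _ ↦
        integrable_inner_sq_sub_one_mul_inner_smul_stdGaussian (W i) w]
      simp only [integral_inner_sq_sub_one_mul_inner_smul_stdGaussian, hW, one_pow, sub_self,
        zero_smul, zero_add]
    _ = (√2 * r) • ∑ i, ⟪W i, w⟫ • W i := by
      simp only [mul_smul (2 : ℝ), ← Finset.smul_sum]
      rw [smul_smul, div_mul_eq_mul_div, mul_div_assoc, Real.div_sqrt, mul_comm]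

lemma integral_comp_toLp_pi_gaussianReal {κ F : Type*} [Fintype κ] [NormedAddCommGroup F]
    [NormedSpace ℝ F] (f : EuclideanSpace ℝ κ → F) :
    ∫ x, f (WithLp.toLp 2 x) ∂Measure.pi (fun _ : κ ↦ gaussianReal 0 1) =
      ∫ y, f y ∂stdGaussian (EuclideanSpace ℝ κ) := by
  rw [← map_pi_eq_stdGaussian, ← MeasurableEquiv.coe_toLp, integral_map_equiv]

end StdGaussian

section DotProduct

variable {ι κ : Type*} [Fintype ι] [Fintype κ]

lemma integral_sum_hermite_two_mul_dotProduct_smul (r : ℝ) {W : ι → κ → ℝ}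
    (hW : ∀ i, W i ⬝ᵥ W i = 1) (w : κ → ℝ) :
    ∫ x, ((r * ∑ i, ((W i ⬝ᵥ x) ^ 2 - 1) / √2) * (w ⬝ᵥ x)) • x
        ∂Measure.pi (fun _ : κ ↦ gaussianReal 0 1) =
      (√2 * r) • ∑ i, (W i ⬝ᵥ w) • W i := by
  have inner_toLp (a x : κ → ℝ) : ⟪WithLp.toLp 2 a, WithLp.toLp 2 x⟫ = a ⬝ᵥ x := by
    simp [EuclideanSpace.inner_toLp_toLp, dotProduct_comm]
  have norm_toLp (i : ι) : ‖WithLp.toLp 2 (W i)‖ = 1 := by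
    rw [← sq_eq_sq₀ (norm_nonneg _) zero_le_one, ← real_inner_self_eq_norm_sq, inner_toLp, hW,
      one_pow]
  have h := integral_sum_hermite_two_mul_inner_smul_stdGaussian r norm_toLp (WithLp.toLp 2 w)
  replace h := congrArg (EuclideanSpace.equiv κ ℝ) h
  rw [← integral_comp_toLp_pi_gaussianReal, ← ContinuousLinearEquiv.integral_comp_comm] at h
  simpa only [inner_toLp, map_smul, map_sum, PiLp.coe_continuousLinearEquiv] using h

lemma sum_dotProduct_smul_dotProduct [DecidableEq ι] {W : ι → κ → ℝ}
    (hW : ∀ i j, W i ⬝ᵥ W j = if i = j then 1 else 0) (w : κ → ℝ) :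
    (∑ i, (W i ⬝ᵥ w) • W i) ⬝ᵥ w =
      (∑ i, (W i ⬝ᵥ w) • W i) ⬝ᵥ ∑ i, (W i ⬝ᵥ w) • W i := by
  simp [sum_dotProduct, dotProduct_sum, hW]

lemma normalize_dotProduct_sub_smul {p w : κ → ℝ} (hpw : p ⬝ᵥ w = p ⬝ᵥ p) :
    ((√(p ⬝ᵥ p))⁻¹ • p) ⬝ᵥ (p - (w ⬝ᵥ p) • w) =
      ((√(p ⬝ᵥ p))⁻¹ • p) ⬝ᵥ w - (((√(p ⬝ᵥ p))⁻¹ • p) ⬝ᵥ w) ^ 3 := by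
  obtain ⟨s, hs⟩ : ∃ s, s = √(p ⬝ᵥ p) := ⟨_, rfl⟩
  have hpp : p ⬝ᵥ p = s ^ 2 := by
    rw [hs, Real.sq_sqrt (by simpa using dotProduct_star_self_nonneg p)]
  rw [← hs]
  simp only [smul_dotProduct, dotProduct_sub, dotProduct_smul, smul_eq_mul, dotProduct_comm w p,
    hpw, hpp]
  rcases eq_or_ne s 0 with rfl | h0
  · simp
  · field_simp

end DotProduct

theorem leading_drift_spherical_gradient_general {ι κ : Type*} [Fintype ι] [DecidableEq ι]
    [Fintype κ] (r : ℝ) (W : ι → κ → ℝ)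
    (hW : ∀ i j, W i ⬝ᵥ W j = if i = j then 1 else 0) (w : κ → ℝ) :
    let γ := Measure.pi fun _ : κ => gaussianReal 0 1
    let f₂ : (κ → ℝ) → ℝ := fun x => r * ∑ i, ((W i ⬝ᵥ x) ^ 2 - 1) / Real.sqrt 2
    let v := ∫ x, (f₂ x * (w ⬝ᵥ x)) • x ∂γ
    let p : κ → ℝ := ∑ i, (W i ⬝ᵥ w) • W i
    (v - (w ⬝ᵥ v) • w = (Real.sqrt 2 * r) • (p - (w ⬝ᵥ p) • w)) ∧
      (p ≠ 0 →
        let u : κ → ℝ := (Real.sqrt (∑ t, p t ^ 2))⁻¹ • p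
        u ⬝ᵥ (v - (w ⬝ᵥ v) • w) = Real.sqrt 2 * r * ((u ⬝ᵥ w) - (u ⬝ᵥ w) ^ 3)) := by
  intro γ f₂ v p
  have hv : v = (√2 * r) • p := integral_sum_hermite_two_mul_dotProduct_smul r (by simp [hW]) w
  have hproj : v - (w ⬝ᵥ v) • w = (√2 * r) • (p - (w ⬝ᵥ p) • w) := by
    rw [hv, dotProduct_smul, smul_sub, smul_smul, smul_eq_mul]
  refine ⟨hproj, fun _ ↦ ?_⟩
  intro u
  have hu : u = (√(p ⬝ᵥ p))⁻¹ • p := by simp only [u, dotProduct, sq]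
  rw [hproj, dotProduct_smul, smul_eq_mul, hu,
    normalize_dotProduct_sub_smul (sum_dotProduct_smul_dotProduct hW w)]

/-- (Leading drift of the spherical gradient) Let `x ∼ N(0, I_d)`, `W*` with orthonormal rows
`w*_1, …, w*_m`, `w` a unit vector, and `f₂(x) = m^{-1/2} Σ_i He₂(⟨w*_i, x⟩)` with
`He₂(z) = (z² − 1)/√2`. Then `E[f₂(x) He₁(⟨w,x⟩) x]` projected orthogonally to `w` equals
`√2 m^{-1/2} (I − wwᵀ)(W*)ᵀW* w`, and its component along `u* = P_{W*}w/‖P_{W*}w‖` equals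
`√2 m^{-1/2} (mₜ − mₜ³)` where `mₜ = ⟨u*, w⟩`. -/
theorem leading_drift_spherical_gradient (d m : ℕ) (hm : 0 < m)
    (W : Fin m → Fin d → ℝ)
    (hW : ∀ i j, W i ⬝ᵥ W j = if i = j then 1 else 0)
    (w : Fin d → ℝ) (hw : ∑ t, w t ^ 2 = 1) :
    let γ := Measure.pi fun _ : Fin d => gaussianReal 0 1
    let f₂ : (Fin d → ℝ) → ℝ :=
      fun x => (m : ℝ) ^ (-(1 : ℝ) / 2) * ∑ i, ((W i ⬝ᵥ x) ^ 2 - 1) / Real.sqrt 2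
    let v := ∫ x, (f₂ x * (w ⬝ᵥ x)) • x ∂γ
    let p : Fin d → ℝ := ∑ i, (W i ⬝ᵥ w) • W i
    (v - (w ⬝ᵥ v) • w = (Real.sqrt 2 * (m : ℝ) ^ (-(1 : ℝ) / 2)) • (p - (w ⬝ᵥ p) • w)) ∧
      (p ≠ 0 →
        let u : Fin d → ℝ := (Real.sqrt (∑ t, p t ^ 2))⁻¹ • p
        u ⬝ᵥ (v - (w ⬝ᵥ v) • w) =
          Real.sqrt 2 * (m : ℝ) ^ (-(1 : ℝ) / 2) * ((u ⬝ᵥ w) - (u ⬝ᵥ w) ^ 3)) :=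
  leading_drift_spherical_gradient_general _ W hW w
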